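/- Fix x ∈ F_{q^m}^n, an integer ρ with 0 ≤ ρ ≤ n, and an integer N ≥ n − ρ. Then there exists a matrix A ∈ F_q^{N×n} with rank A = n − ρ over F_q such that the rank weight of x A^T equals max(0, d_R(x,0) − ρ), i.e., the dimension over F_q of the F_q-span of the coordinates of x A^T is max(0, d_R(x,0) − ρ). -/

import Mathlib

open scoped BigOperators

noncomputable section

variable (q : ℕ) (Fq : Type*) {Fqm : Type*} [Field Fq] [Field Fqm] [Algebra Fq Fqm]

/-- `V = V^q`: the image of `V` under the coordinatewise `q`-th power map equals `V`
(membership in the family `Γ(F_{q^m}^n)`). -/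
def IsGalClosed {n : ℕ} (V : Submodule Fqm (Fin n → Fqm)) : Prop :=
  (fun v : Fin n → Fqm => fun i => v i ^ q) '' (V : Set (Fin n → Fqm)) =
    (V : Set (Fin n → Fqm))

/-- The `i`-th relative dimension/intersection profile (RDIP) of `C1` and `C2`. -/
noncomputable def RDIP {n : ℕ} (C1 C2 : Submodule Fqm (Fin n → Fqm)) (i : ℕ) : ℕ :=
  sSup {d : ℕ | ∃ V : Submodule Fqm (Fin n → Fqm), IsGalClosed q V ∧
    Module.finrank Fqm ↥V = i ∧
    d = Module.finrank Fqm ↥(C1 ⊓ V) - Module.finrank Fqm ↥(C2 ⊓ V)}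

/-- The `i`-th relative generalized rank weight (RGRW) of `C1` and `C2`. -/
noncomputable def RGRW {n : ℕ} (C1 C2 : Submodule Fqm (Fin n → Fqm)) (i : ℕ) : ℕ :=
  sInf {d : ℕ | ∃ V : Submodule Fqm (Fin n → Fqm), IsGalClosed q V ∧
    d = Module.finrank Fqm ↥V ∧
    i ≤ Module.finrank Fqm ↥(C1 ⊓ V) - Module.finrank Fqm ↥(C2 ⊓ V)}

/-- The rank weight `d_R(x,0)` of a vector: the `F_q`-dimension of the `F_q`-span of
its coordinates. -/
noncomputable def rankWeight {ι : Type*} (x : ι → Fqm) : ℕ :=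
  Module.finrank Fq ↥(Submodule.span Fq (Set.range x))

/-- The minimum rank distance of a (nonzero) linear code. -/
noncomputable def minRankDist {ι : Type*} (C : Submodule Fqm (ι → Fqm)) : ℕ :=
  sInf {d : ℕ | ∃ x, x ∈ C ∧ x ≠ 0 ∧ d = rankWeight Fq x}

/-- The dual code with respect to the standard bilinear form `⟨x,y⟩ = ∑ i, x i * y i`. -/
def dualCode {n : ℕ} (V : Submodule Fqm (Fin n → Fqm)) : Submodule Fqm (Fin n → Fqm) where
  carrier := {x | ∀ v ∈ V, ∑ i, x i * v i = 0}
  add_mem' := by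
    intro a b ha hb v hv
    have h1 := ha v hv
    have h2 := hb v hv
    simp only [Set.mem_setOf_eq] at *
    simp only [Pi.add_apply, add_mul]
    rw [Finset.sum_add_distrib, h1, h2, add_zero]
  zero_mem' := by
    intro v hv
    simp
  smul_mem' := by
    intro c x hx v hv
    have h := hx v hv
    simp only [Set.mem_setOf_eq] at *
    simp only [Pi.smul_apply, smul_eq_mul, mul_assoc]
    rw [← Finset.mul_sum, h, mul_zero]


/-- `X Aᵀ ∈ F_{q^m}^N`: the image of a row vector `X ∈ F_{q^m}^n` under the
`F_{q^m}`-linear map obtained by extending `A ∈ F_q^{N×n}` scalarwise from `F_q`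
to `F_{q^m}`. -/
noncomputable def appMat {N n : ℕ} (A : Fin N → Fin n → Fq) (X : Fin n → Fqm) :
    Fin N → Fqm :=
  fun j => ∑ i, X i * algebraMap Fq Fqm (A j i)

/-- The rank over `F_q` of a matrix `A ∈ F_q^{N×n}` (the dimension of its row
space). -/
noncomputable def matRank {N n : ℕ} (A : Fin N → Fin n → Fq) : ℕ :=
  Module.finrank Fq ↥(Submodule.span Fq (Set.range A))

/-!
The rows of `A` enter only through their span `R ⊆ F_q^n`. Writing `f : F_q^n → F_{q^m}` for the
map `a ↦ ∑ i, a i • x i`, whose rank is the rank weight of `x`, the entries of `x Aᵀ` span `f(R)`.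
So one needs a subspace `R` of codimension `ρ` with `dim f(R) = max(0, rank f - ρ)`, and every `R`
comparable with `ker f` has this property: if `ker f ≤ R`, passing from `F_q^n` to `R` costs `ρ`
dimensions in the image, and if `R ≤ ker f`, the image vanishes.
-/

section LinearAlgebra

open Module

variable {R M : Type*} [Semiring R] [StrongRankCondition R] [AddCommMonoid M] [Module R M]

theorem exists_submodule_le_finrank_eq (S : Submodule R M) {d : ℕ}
    (hd : d ≤ finrank R S) : ∃ D ≤ S, finrank R D = d := by
  have := nontrivial_of_invariantBasisNumber R
  obtain ⟨v, hv⟩ := exists_linearIndependent_of_le_finrank hd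
  refine ⟨(Submodule.span R (Set.range v)).map S.subtype, Submodule.map_subtype_le _ _, ?_⟩
  rw [Submodule.finrank_map_subtype_eq, finrank_span_eq_card hv, Fintype.card_fin]

theorem exists_fin_span_range_eq (S : Submodule R M) [Module.Free R S] [Module.Finite R S] {N : ℕ}
    (hN : finrank R S ≤ N) : ∃ v : Fin N → M, Submodule.span R (Set.range v) = S := by
  let b := finBasis R S
  refine ⟨Function.extend (Fin.castLE hN) (fun i => (b i : M)) 0, ?_⟩
  have hb : Submodule.span R (Set.range fun i => (b i : M)) = S := by
    rw [Set.range_comp' Subtype.val b, ← S.coe_subtype, ← Submodule.map_span, b.span_eq,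
      Submodule.map_subtype_top]
  have hzero (s : Set (Fin N)) : Submodule.span R ((0 : Fin N → M) '' s) = ⊥ := by
    rw [Submodule.span_eq_bot]
    rintro _ ⟨_, -, rfl⟩
    rfl
  rw [Set.range_extend (Fin.castLE_injective hN), Submodule.span_union, hb, hzero, sup_bot_eq]

variable {K V W : Type*} [DivisionRing K] [AddCommGroup V] [Module K V]
  [AddCommGroup W] [Module K W]

theorem exists_submodule_between_finrank_eq {S T : Submodule K V} [FiniteDimensional K T]
    (hST : S ≤ T) {d : ℕ} (hSd : finrank K S ≤ d) (hdT : d ≤ finrank K T) :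
    ∃ R, S ≤ R ∧ R ≤ T ∧ finrank K R = d := by
  have finrank_sup {C : Submodule K V} (hC : C ≤ T) (hSC : Disjoint S C) :
      finrank K ↑(S ⊔ C) = finrank K S + finrank K C := by
    have := Submodule.finiteDimensional_of_le hST
    have := Submodule.finiteDimensional_of_le hC
    rw [← Submodule.finrank_sup_add_finrank_inf_eq, hSC.eq_bot, finrank_bot, add_zero]
  obtain ⟨C, hSC, rfl⟩ := IsModularLattice.exists_disjoint_and_sup_eq hST
  rw [finrank_sup le_sup_right hSC] at hdT
  obtain ⟨D, hDC, hD⟩ := exists_submodule_le_finrank_eq C (Nat.sub_le_iff_le_add'.2 hdT)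
  refine ⟨S ⊔ D, le_sup_left, sup_le_sup_left hDC S, ?_⟩
  rw [finrank_sup (hDC.trans le_sup_right) (hSC.mono_right hDC), hD, Nat.add_sub_cancel' hSd]

theorem finrank_map_add_finrank_ker_of_ker_le (f : V →ₗ[K] W) {R : Submodule K V}
    [FiniteDimensional K R] (hR : LinearMap.ker f ≤ R) :
    finrank K (R.map f) + finrank K (LinearMap.ker f) = finrank K R := by
  rw [← (f.domRestrict R).finrank_range_add_finrank_ker, LinearMap.range_domRestrict,
    LinearMap.ker_domRestrict, (Submodule.comapSubtypeEquivOfLe hR).finrank_eq]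

theorem exists_submodule_finrank_quotient_eq_and_finrank_map_eq [FiniteDimensional K V]
    (f : V →ₗ[K] W) {ρ : ℕ} (hρ : ρ ≤ finrank K V) :
    ∃ R : Submodule K V, finrank K (V ⧸ R) = ρ ∧
      finrank K (R.map f) = finrank K (LinearMap.range f) - ρ := by
  have rank_nullity := f.finrank_range_add_finrank_ker
  rcases le_total (finrank K (LinearMap.ker f)) (finrank K V - ρ) with hker | hker
  · obtain ⟨R, hkerR, -, hR⟩ := exists_submodule_between_finrank_eq
      (le_top : LinearMap.ker f ≤ ⊤) hker (finrank_top K V ▸ Nat.sub_le _ _)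
    have hmap := finrank_map_add_finrank_ker_of_ker_le f hkerR
    have hquot := R.finrank_quotient_add_finrank
    exact ⟨R, by omega, by omega⟩
  · obtain ⟨R, hRker, hR⟩ := exists_submodule_le_finrank_eq (LinearMap.ker f) hker
    have hmap : R.map f = ⊥ := LinearMap.le_ker_iff_map.1 hRker
    have hquot := R.finrank_quotient_add_finrank
    refine ⟨R, by omega, ?_⟩
    rw [hmap, finrank_bot]
    omega

end LinearAlgebra

theorem finrank_range_linearCombination_eq_rankWeight {ι : Type*} [Fintype ι] (x : ι → Fqm) :
    Module.finrank Fq (LinearMap.range (Fintype.linearCombination Fq x)) = rankWeight Fq x := by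
  rw [Fintype.range_linearCombination, rankWeight]

theorem appMat_eq_linearCombination_comp {N n : ℕ} (A : Fin N → Fin n → Fq) (x : Fin n → Fqm) :
    appMat Fq A x = Fintype.linearCombination Fq x ∘ A := by
  ext j
  simp only [appMat, Function.comp_apply, Fintype.linearCombination_apply, Algebra.smul_def,
    mul_comm]

theorem rankWeight_appMat {N n : ℕ} (A : Fin N → Fin n → Fq) (x : Fin n → Fqm) :
    rankWeight Fq (appMat Fq A x) = Module.finrank Fq
      ((Submodule.span Fq (Set.range A)).map (Fintype.linearCombination Fq x)) := by
  rw [rankWeight, appMat_eq_linearCombination_comp, Set.range_comp, Submodule.map_span]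

theorem stmt16_general {n N ρ : ℕ} (x : Fin n → Fqm) (hρ : ρ ≤ n) (hN : n - ρ ≤ N) :
    ∃ A : Fin N → Fin n → Fq,
      matRank Fq A = n - ρ ∧
      rankWeight Fq (appMat Fq A x) = rankWeight Fq x - ρ := by
  obtain ⟨R, hcodim, hmap⟩ := exists_submodule_finrank_quotient_eq_and_finrank_map_eq
    (Fintype.linearCombination Fq x) (hρ.trans_eq (Module.finrank_fin_fun Fq).symm)
  have hR : Module.finrank Fq R = n - ρ := by
    have hquot := R.finrank_quotient_add_finrank
    rw [hcodim, Module.finrank_fin_fun] at hquot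
    omega
  obtain ⟨A, hA⟩ := exists_fin_span_range_eq R (hR.trans_le hN)
  refine ⟨A, by rw [matRank, hA, hR], ?_⟩
  rw [rankWeight_appMat, hA, hmap, finrank_range_linearCombination_eq_rankWeight]

/-- For every `x ∈ F_{q^m}^n`, `0 ≤ ρ ≤ n` and `N ≥ n - ρ`, there is
a matrix `A ∈ F_q^{N×n}` of rank `n - ρ` over `F_q` such that the rank weight of
`x Aᵀ` equals `max(0, d_R(x,0) - ρ)` (natural subtraction). -/
theorem stmt16 (m n N ρ : ℕ) [Fintype Fq] [Fintype Fqm]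
    (hq : Fintype.card Fq = q) (hm : Module.finrank Fq Fqm = m)
    (x : Fin n → Fqm) (hρ : ρ ≤ n) (hN : n - ρ ≤ N) :
    ∃ A : Fin N → Fin n → Fq,
      matRank Fq A = n - ρ ∧
      rankWeight Fq (appMat Fq A x) = rankWeight Fq x - ρ := by
  exact stmt16_general Fq x hρ hN

end
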